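/- Let G be a finite simple connected graph. A vertex v ∈ V(G) belongs to every monitoring edge-geodetic set of G if and only if there exists a neighbor u of v such that for every neighbor x of v, every induced 2-path u–v–x (i.e., u, x ∈ N(v) with u ≠ x and u not adjacent to x) is contained in a 4-cycle of G. -/

import Mathlib

/-!
If every neighbour `u` of `v` has a neighbour `x` of `v` for which `u–v–x` is an induced 2-path in
no 4-cycle, then `u–v–x` is the only shortest `u`–`x` path, so the pair `u, x` monitors `uv`; an
edge avoiding `v` is monitored by its own endpoints. Hence the complement of `{v}` is a MEG-set.

Conversely, let `u` be a neighbour as in the statement and let `a, b ≠ v` monitor `uv`. Up to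
exchanging `a` and `b`, a shortest `a`–`b` path has the form `a ⋯ x v u ⋯ b`, and `x–v–u` is an
induced 2-path. Replacing `v` by the fourth vertex `w` of the 4-cycle gives an `a`–`b` walk of the
same length that misses `v`, contradicting the choice of `a, b`; this is
`false_of_split_at_edge`.
-/

open SimpleGraph

variable {V : Type*}

/-- A walk is a shortest path if its length equals the distance between its endpoints. -/
def IsShortest (G : SimpleGraph V) {u v : V} (p : G.Walk u v) : Prop :=
  p.length = G.dist u v

/-- `S` is a geodetic set: every vertex lies on some shortest path between
two distinct vertices of `S`. -/
def IsGeodeticSet (G : SimpleGraph V) (S : Set V) : Prop :=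
  ∀ x : V, ∃ u ∈ S, ∃ v ∈ S, u ≠ v ∧ ∃ p : G.Walk u v, IsShortest G p ∧ x ∈ p.support

/-- `S` is an edge-geodetic set: every edge lies on some shortest path between
two distinct vertices of `S`. -/
def IsEdgeGeodeticSet (G : SimpleGraph V) (S : Set V) : Prop :=
  ∀ e ∈ G.edgeSet, ∃ u ∈ S, ∃ v ∈ S, u ≠ v ∧ ∃ p : G.Walk u v, IsShortest G p ∧ e ∈ p.edges

/-- `S` is a strong edge-geodetic set: one can choose a single shortest path for each
pair of distinct vertices of `S` so that the chosen paths cover every edge. -/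
def IsStrongEdgeGeodeticSet (G : SimpleGraph V) (S : Set V) : Prop :=
  ∃ f : ∀ u v : V, u ∈ S → v ∈ S → u ≠ v → G.Walk u v,
    (∀ u v hu hv huv, IsShortest G (f u v hu hv huv)) ∧
    ∀ e ∈ G.edgeSet, ∃ u v, ∃ hu : u ∈ S, ∃ hv : v ∈ S, ∃ huv : u ≠ v,
      e ∈ (f u v hu hv huv).edges

/-- The pair `u, v` monitors the edge `e`: `u ≠ v` and `e` lies on every shortest
`u`–`v` path. -/
def Monitors (G : SimpleGraph V) (u v : V) (e : Sym2 V) : Prop :=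
  u ≠ v ∧ ∀ p : G.Walk u v, IsShortest G p → e ∈ p.edges

/-- `S` is a monitoring edge-geodetic set: every edge is monitored by some pair of
distinct vertices of `S`. -/
def IsMEGSet (G : SimpleGraph V) (S : Set V) : Prop :=
  ∀ e ∈ G.edgeSet, ∃ u ∈ S, ∃ v ∈ S, Monitors G u v e

/-- The geodetic number `g(G)`. -/
noncomputable def geodeticNumber (G : SimpleGraph V) : ℕ :=
  sInf {n : ℕ | ∃ S : Set V, IsGeodeticSet G S ∧ S.ncard = n}

/-- The edge-geodetic number `eg(G)`. -/
noncomputable def edgeGeodeticNumber (G : SimpleGraph V) : ℕ :=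
  sInf {n : ℕ | ∃ S : Set V, IsEdgeGeodeticSet G S ∧ S.ncard = n}

/-- The strong edge-geodetic number `seg(G)`. -/
noncomputable def strongEdgeGeodeticNumber (G : SimpleGraph V) : ℕ :=
  sInf {n : ℕ | ∃ S : Set V, IsStrongEdgeGeodeticSet G S ∧ S.ncard = n}

/-- The monitoring edge-geodetic number `meg(G)`. -/
noncomputable def monitoringEdgeGeodeticNumber (G : SimpleGraph V) : ℕ :=
  sInf {n : ℕ | ∃ S : Set V, IsMEGSet G S ∧ S.ncard = n}

/-- A walk through an edge splits, in one of the two orientations of that edge, into a walk up to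
the edge and a walk after it. -/
lemma exists_split_of_mem_edges {V : Type*} {G : SimpleGraph V} {a b s t : V} (p : G.Walk a b)
    (h : s(s, t) ∈ p.edges) :
    (∃ (q : G.Walk a s) (r : G.Walk t b), p.length = q.length + 1 + r.length) ∨
      (∃ (q : G.Walk a t) (r : G.Walk s b), p.length = q.length + 1 + r.length) := by
  induction p with
  | nil => simp at h
  | cons hadj p ih =>
    rw [Walk.edges_cons, List.mem_cons] at h
    rcases h with h | h
    · rcases Sym2.eq_iff.1 h with ⟨rfl, rfl⟩ | ⟨rfl, rfl⟩
      · exact Or.inl ⟨Walk.nil, p, by simp; omega⟩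
      · exact Or.inr ⟨Walk.nil, p, by simp; omega⟩
    · rcases ih h with ⟨q, r, hl⟩ | ⟨q, r, hl⟩
      · exact Or.inl ⟨Walk.cons hadj q, r, by simp; omega⟩
      · exact Or.inr ⟨Walk.cons hadj q, r, by simp; omega⟩

lemma Monitors.symm {V : Type*} {G : SimpleGraph V} {a b : V} {e : Sym2 V}
    (h : Monitors G a b e) : Monitors G b a e := by
  refine ⟨h.1.symm, fun p hp => ?_⟩
  have := h.2 p.reverse (by
    unfold IsShortest at *
    rw [Walk.length_reverse, hp, dist_comm])
  simpa using this

lemma dist_le_of_mem_support {V : Type*} {G : SimpleGraph V} {a b v : V} (p : G.Walk a b)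
    (h : v ∈ p.support) : G.dist a v ≤ p.length ∧ G.dist v b ≤ p.length := by
  classical
  exact ⟨(dist_le _).trans (p.length_takeUntil_le_length h),
    (dist_le _).trans (p.length_dropUntil_le_length h)⟩

/-- Under the 4-cycle condition at `u`, no shortest path between a pair `a, b` monitoring `vu`
with `a ≠ v` traverses this edge from `v` to `u`: the vertex `v` could be bypassed. -/
lemma false_of_split_at_edge {V : Type*} {G : SimpleGraph V} (hconn : G.Connected) {u v a b : V}
    (hvu : G.Adj v u)
    (hu : ∀ x : V, G.Adj v x → u ≠ x → ¬ G.Adj u x → ∃ w : V, w ≠ v ∧ G.Adj u w ∧ G.Adj x w)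
    (hm : Monitors G a b s(v, u)) (ha : a ≠ v) (q : G.Walk a v) (r : G.Walk u b)
    (hl : G.dist a b = q.length + 1 + r.length) : False := by
  obtain ⟨x, hxv, q', hq⟩ : ∃ x, G.Adj v x ∧ ∃ q' : G.Walk a x, q.length = q'.length + 1 := by
    have hrev := q.length_reverse
    cases hc : q.reverse with
    | nil => exact absurd rfl ha
    | cons h t =>
      rw [hc] at hrev
      exact ⟨_, h, t.reverse, by simpa using hrev.symm⟩
  have hux : u ≠ x := by
    rintro rfl
    have := dist_le (q'.append r)
    rw [Walk.length_append] at this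
    omega
  have hnadj : ¬ G.Adj u x := by
    intro h
    have := dist_le (q'.append (Walk.cons h.symm r))
    rw [Walk.length_append, Walk.length_cons] at this
    omega
  obtain ⟨w, hwv, huw, hxw⟩ := hu x hxv hux hnadj
  have hmem := hm.2 (q'.append (Walk.cons hxw (Walk.cons huw.symm r))) (by
    unfold IsShortest
    rw [Walk.length_append, Walk.length_cons, Walk.length_cons]
    omega)
  have hv := Walk.fst_mem_support_of_mem_edges _ hmem
  rw [Walk.mem_support_append_iff, Walk.support_cons, Walk.support_cons, List.mem_cons,
    List.mem_cons] at hv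
  have htri := hconn.dist_triangle (u := a) (v := v) (w := b)
  have h1 := dist_le q
  have h2 := dist_le (Walk.cons hvu r)
  rw [Walk.length_cons] at h2
  -- A visit to `v` on `q'` or on `r` would shorten the `a`–`b` distance.
  rcases hv with hv | hv | hv | hv
  · have := (dist_le_of_mem_support q' hv).1
    omega
  · exact hxv.ne hv
  · exact hwv hv.symm
  · have := (dist_le_of_mem_support r hv).2
    omega

lemma monitors_of_adj {V : Type*} {G : SimpleGraph V} {a b : V} (h : G.Adj a b) :
    Monitors G a b s(a, b) := by
  refine ⟨h.ne, fun p hp => ?_⟩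
  unfold IsShortest at hp
  rw [dist_eq_one_iff_adj.2 h] at hp
  cases p with
  | nil => simp at hp
  | cons h' p =>
    cases p with
    | nil => simp
    | cons h'' p => simp at hp

/-- An induced 2-path in no 4-cycle is the unique shortest path between its ends. -/
lemma monitors_of_unique_common_neighbor {V : Type*} {G : SimpleGraph V} {u v x : V}
    (hvu : G.Adj v u) (hvx : G.Adj v x) (hux : u ≠ x) (hnadj : ¬ G.Adj u x)
    (hw : ∀ w, G.Adj u w → G.Adj x w → w = v) : Monitors G u x s(v, u) := by
  refine ⟨hux, fun p hp => ?_⟩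
  have hle : p.length ≤ 2 := by
    unfold IsShortest at hp
    rw [hp]
    exact dist_le (Walk.cons hvu.symm (Walk.cons hvx Walk.nil))
  cases p with
  | nil => exact absurd rfl hux
  | cons h1 p =>
    cases p with
    | nil => exact absurd h1 hnadj
    | cons h2 p =>
      cases p with
      | nil =>
        obtain rfl := hw _ h1 h2.symm
        simp [Sym2.eq_swap]
      | cons h3 p =>
        simp at hle

/-- A vertex `v` belongs to every monitoring edge-geodetic set iff there is
a neighbor `u` of `v` such that every induced 2-path `u–v–x` (with `x` a neighbor of `v`,
`u ≠ x`, `u` not adjacent to `x`) is part of a 4-cycle. -/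
theorem mem_every_meg_iff_four_cycle {V : Type*} [Fintype V]
    (G : SimpleGraph V) (hconn : G.Connected) (v : V) :
    (∀ S : Set V, IsMEGSet G S → v ∈ S) ↔
      ∃ u : V, G.Adj v u ∧ ∀ x : V, G.Adj v x → u ≠ x → ¬ G.Adj u x →
        ∃ w : V, w ≠ v ∧ G.Adj u w ∧ G.Adj x w := by
  constructor
  · intro h
    by_contra hno
    push Not at hno
    refine h {v}ᶜ (fun e he => ?_) rfl
    -- An edge at `v` is monitored by `u` and a neighbour `x` witnessing the failure at `u`.
    have key : ∀ u, G.Adj v u →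
        ∃ a ∈ ({v}ᶜ : Set V), ∃ b ∈ ({v}ᶜ : Set V), Monitors G a b s(v, u) := by
      intro u hu
      obtain ⟨x, hvx, hux, hnadj, hw⟩ := hno u hu
      exact ⟨u, hu.ne', x, hvx.ne', monitors_of_unique_common_neighbor hu hvx hux hnadj
        fun w h1 h2 => by_contra fun hne => hw w hne h1 h2⟩
    induction e using Sym2.ind with
    | _ s t =>
      have hst : G.Adj s t := he
      by_cases hs : s = v
      · subst hs
        exact key t hst
      by_cases ht : t = v
      · subst ht
        rw [Sym2.eq_swap]
        exact key s hst.symm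
      exact ⟨s, hs, t, ht, monitors_of_adj hst⟩
  · rintro ⟨u, hvu, hu⟩ S hS
    by_contra hvS
    obtain ⟨a, ha, b, hb, hm⟩ := hS s(v, u) hvu
    have hav : a ≠ v := fun h => hvS (h ▸ ha)
    have hbv : b ≠ v := fun h => hvS (h ▸ hb)
    obtain ⟨p, hp⟩ := hconn.exists_walk_length_eq_dist a b
    rcases exists_split_of_mem_edges p (hm.2 p hp) with ⟨q, r, hl⟩ | ⟨q, r, hl⟩
    · exact false_of_split_at_edge hconn hvu hu hm hav q r (hp ▸ hl)
    · refine false_of_split_at_edge hconn hvu hu hm.symm hbv r.reverse q.reverse ?_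
      rw [dist_comm, ← hp, hl, Walk.length_reverse, Walk.length_reverse]
      omega
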